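/- For every n ≥ 2, every index 1 ≤ i ≤ n−1, and all integers k_1,…,k_{i−1}, m, k_{i+2},…,k_n, writing t(x,y) := α(n; k_1,…,k_{i−1}, x, y, k_{i+2},…,k_n), the identity t(m, m+2) = t(m,m) + t(m+1,m+1) + t(m+2,m+2) + t(m+2,m+1) + t(m+1,m) holds. -/

import Mathlib

/-- A triangular array of size `n`, encoded as a function `ℕ → ℕ → ℤ` whose
meaningful entries are `a i j` for `1 ≤ j ≤ i ≤ n` (row `i` has entries
`a i 1, …, a i i`), normalized to be `0` outside this region. -/
def IsTri (n : ℕ) (a : ℕ → ℕ → ℤ) : Prop :=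
  ∀ i j, ¬ (1 ≤ j ∧ j ≤ i ∧ i ≤ n) → a i j = 0

/-- A Monotone Triangle of size `n`: strict increase along rows and weak
increase along North-East and South-East diagonals. -/
def IsMT (n : ℕ) (a : ℕ → ℕ → ℤ) : Prop :=
  IsTri n a ∧
  (∀ i j, 1 ≤ j → j + 1 ≤ i → i ≤ n → a i j < a i (j + 1)) ∧
  (∀ i j, 1 ≤ j → j ≤ i → i + 1 ≤ n →
    a (i + 1) j ≤ a i j ∧ a i j ≤ a (i + 1) (j + 1))

/-- A Generalized Monotone Triangle (GMT) of size `n`. -/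
def IsGMT (n : ℕ) (a : ℕ → ℕ → ℤ) : Prop :=
  IsTri n a ∧
  -- (1) each entry is weakly bounded by its SW- and SE-neighbour
  (∀ i j, 1 ≤ j → j ≤ i → i + 1 ≤ n →
    min (a (i + 1) j) (a (i + 1) (j + 1)) ≤ a i j ∧
    a i j ≤ max (a (i + 1) j) (a (i + 1) (j + 1))) ∧
  -- (2) three weakly increasing consecutive entries force strict increase above
  (∀ i j, 1 ≤ j → j + 1 ≤ i → i + 1 ≤ n →
    a (i + 1) j ≤ a (i + 1) (j + 1) → a (i + 1) (j + 1) ≤ a (i + 1) (j + 2) →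
    a i j < a i (j + 1)) ∧
  -- (3) equality over a strict descent forces an equal neighbour
  (∀ i j, 1 ≤ j → j ≤ i → i + 1 ≤ n →
    (a i j = a (i + 1) j → a (i + 1) (j + 1) < a (i + 1) j →
      2 ≤ j ∧ a i (j - 1) = a i j) ∧
    (a (i + 1) (j + 1) < a (i + 1) j → a (i + 1) (j + 1) = a i j →
      j + 1 ≤ i ∧ a i (j + 1) = a i j))

/-- The bottom row of a triangular array of size `n` is `(k 0, …, k (n-1))`
(1-indexed in the array). -/
def BottomRow (n : ℕ) (a : ℕ → ℕ → ℤ) (k : Fin n → ℤ) : Prop :=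
  ∀ j : Fin n, a n (j.1 + 1) = k j

/-- The set of Monotone Triangles of size `n` with bottom row `k`. -/
def MTset (n : ℕ) (k : Fin n → ℤ) : Set (ℕ → ℕ → ℤ) :=
  {a | IsMT n a ∧ BottomRow n a k}

/-- The set `𝒢ₙ(k)` of Generalized Monotone Triangles of size `n` with bottom row `k`. -/
def GMTset (n : ℕ) (k : Fin n → ℤ) : Set (ℕ → ℕ → ℤ) :=
  {a | IsGMT n a ∧ BottomRow n a k}

/-- The positions `(i, j)` of newcomers of a triangular array:
`a (i+1) j > a i j > a (i+1) (j+1)`. -/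
def newcomersF (n : ℕ) (a : ℕ → ℕ → ℤ) : Finset (ℕ × ℕ) :=
  ((Finset.range (n + 1)) ×ˢ (Finset.range (n + 1))).filter (fun p =>
    1 ≤ p.2 ∧ p.2 ≤ p.1 ∧ p.1 + 1 ≤ n ∧
    a p.1 p.2 < a (p.1 + 1) p.2 ∧ a (p.1 + 1) (p.2 + 1) < a p.1 p.2)

/-- The positions `(i, j)` of sign-changing pairs `(a i j, a i (j+1))` of a
triangular array: two equal consecutive entries whose interlaced neighbour
below is also equal to them. -/
def scPairsF (n : ℕ) (a : ℕ → ℕ → ℤ) : Finset (ℕ × ℕ) :=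
  ((Finset.range (n + 1)) ×ˢ (Finset.range (n + 1))).filter (fun p =>
    1 ≤ p.2 ∧ p.2 + 1 ≤ p.1 ∧ p.1 + 1 ≤ n ∧
    a p.1 p.2 = a p.1 (p.2 + 1) ∧ a (p.1 + 1) (p.2 + 1) = a p.1 p.2)

/-- `sc(A)`: the total number of newcomers and sign-changing pairs of `A`. -/
def scT (n : ℕ) (a : ℕ → ℕ → ℤ) : ℕ :=
  (newcomersF n a).card + (scPairsF n a).card

/-- `IsAlpha N f` asserts that `f` is the polynomial function
`α(N; k₁, …, k_N)`: it is given by a polynomial with rational coefficients of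
degree at most `N - 1` in each variable, and its value at every strictly
increasing integer sequence equals the number of Monotone Triangles with that
bottom row. -/
def IsAlpha (N : ℕ) (f : (Fin N → ℤ) → ℚ) : Prop :=
  (∃ P : MvPolynomial (Fin N) ℚ, (∀ i : Fin N, P.degreeOf i ≤ N - 1) ∧
    ∀ k : Fin N → ℤ, f k = MvPolynomial.eval (fun i => (k i : ℚ)) P) ∧
  (∀ k : Fin N → ℤ, StrictMono k → f k = ((MTset N k).ncard : ℚ))

/-!
For `V = 1 + E_x E_y - E_y`, with `E_x` and `E_y` the unit shifts of two adjacent arguments, Fischer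
showed that `V t(x, y)` is antisymmetric in `x` and `y`, where `t(x, y)` is `α` as a function of
these arguments. The identity is the relation `V t(m, m) + V t(m + 1, m + 1) +
(V t(m, m + 1) + V t(m + 1, m)) = 0`.

To prove the antisymmetry, extend the sum over the penultimate row from strictly increasing bottom
rows to all bottom rows by reading sums over intervals as antidifferences. This signed recursion
preserves polynomiality, so it computes `α` on all of `ℤⁿ`, and it preserves shift-antisymmetry:
the double antidifference `P` of a shift-antisymmetric function has `V P` symmetric up to a sum of
two functions of one variable, and applying the commuting operators `V` of all three pairs among
three consecutive arguments transports this to the next row.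
-/

open Finset
open Function (update Periodic)

section SignedSum

/-- The sum of `q` over the integer interval `[u, v)`, extended to `v < u` so that it remains an
antidifference of `q` in `v`. -/
noncomputable def signedSum {M : Type*} [AddCommGroup M] (u v : ℤ) (q : ℤ → M) : M :=
  ∑ l ∈ Ico u v, q l - ∑ l ∈ Ico v u, q l

variable {M : Type*} [AddCommGroup M]

theorem signedSum_of_le {u v : ℤ} (h : u ≤ v) (q : ℤ → M) :
    signedSum u v q = ∑ l ∈ Ico u v, q l := by
  simp [signedSum, Ico_eq_empty_of_le h]

theorem signedSum_self (u : ℤ) (q : ℤ → M) : signedSum u u q = 0 := by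
  simp [signedSum]

theorem signedSum_succ_right (u v : ℤ) (q : ℤ → M) :
    signedSum u (v + 1) q = signedSum u v q + q v := by
  rcases le_or_gt u v with h | h
  · rw [signedSum_of_le h, signedSum_of_le (by lia), ← insert_Ico_right_eq_Ico_add_one h,
      sum_insert (by simp), add_comm]
  · rw [signedSum, signedSum, ← insert_Ico_add_one_left_eq_Ico h, sum_insert (by simp),
      Ico_eq_empty_of_le h.le, Ico_eq_empty_of_le (by lia)]
    abel

theorem signedSum_eq_sub {q Q : ℤ → M} (h : ∀ v, Q (v + 1) = Q v + q v) (u v : ℤ) :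
    signedSum u v q = Q v - Q u := by
  have hper : Periodic (fun v => signedSum u v q - Q v) 1 := fun v => by
    simp [signedSum_succ_right, h]
  have huv := (hper.int_mul_eq v).trans (hper.int_mul_eq u).symm
  simp only [mul_one, Int.cast_id, signedSum_self, zero_sub] at huv
  rw [sub_eq_iff_eq_add.1 huv, neg_add_eq_sub]

theorem signedSum_eq_sub_signedSum (u v w : ℤ) (q : ℤ → M) :
    signedSum u v q = signedSum w v q - signedSum w u q :=
  signedSum_eq_sub (Q := (signedSum w · q)) (signedSum_succ_right w · q) u v

theorem signedSum_succ_left (u v : ℤ) (q : ℤ → M) :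
    signedSum (u + 1) v q = signedSum u v q - q u := by
  rw [signedSum_eq_sub_signedSum _ _ u, signedSum_succ_right, signedSum_self, zero_add]

theorem signedSum_add (u v : ℤ) (q r : ℤ → M) :
    signedSum u v (fun l => q l + r l) = signedSum u v q + signedSum u v r := by
  simp only [signedSum, sum_add_distrib]
  abel

theorem signedSum_sub (u v : ℤ) (q r : ℤ → M) :
    signedSum u v (fun l => q l - r l) = signedSum u v q - signedSum u v r := by
  simp only [signedSum, sum_sub_distrib]
  abel

theorem signedSum_mul_left {R : Type*} [Ring R] (u v : ℤ) (c : R) (q : ℤ → R) :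
    signedSum u v (fun l => c * q l) = c * signedSum u v q := by
  simp only [signedSum, ← mul_sum, mul_sub]

theorem signedSum_mul_right {R : Type*} [Ring R] (u v : ℤ) (q : ℤ → R) (c : R) :
    signedSum u v (fun l => q l * c) = signedSum u v q * c := by
  simp only [signedSum, ← sum_mul, sub_mul]

end SignedSum

section ShiftAntisymm

variable {M : Type*} [AddCommGroup M]

/-- The operator `1 + E_x E_y - E_y`, where `E_x` and `E_y` are the unit shifts of the two
arguments. -/
def shiftComb (t : ℤ → ℤ → M) (x y : ℤ) : M :=
  t x y + t (x + 1) (y + 1) - t x (y + 1)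

/-- Fischer's shift-antisymmetry `(1 + E_x E_y - E_y) t(x, y) = - (1 + E_x E_y - E_x) t(y, x)`. -/
def ShiftAntisymm (t : ℤ → ℤ → M) : Prop :=
  ∀ x y, shiftComb t x y = -shiftComb t y x

/-- The symmetric part of `t` is a sum of two functions of one variable: its value at `(x, y)` is
determined by the diagonal. -/
def DiagBalanced (t : ℤ → ℤ → M) : Prop :=
  ∀ x y, t x y + t y x = t x x + t y y

namespace ShiftAntisymm

protected theorem zero : ShiftAntisymm (fun _ _ => (0 : M)) := by
  simp [ShiftAntisymm, shiftComb]

protected theorem neg {t : ℤ → ℤ → M} (ht : ShiftAntisymm t) : ShiftAntisymm fun x y => -t x y :=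
  fun x y => by
    have h := ht x y
    simp only [shiftComb] at h ⊢
    linear_combination (norm := module) -h

protected theorem add {s t : ℤ → ℤ → M} (hs : ShiftAntisymm s) (ht : ShiftAntisymm t) :
    ShiftAntisymm fun x y => s x y + t x y := fun x y => by
  have h := hs x y
  have h' := ht x y
  simp only [shiftComb] at h h' ⊢
  linear_combination (norm := module) h + h'

protected theorem sum {ι : Type*} (s : Finset ι) {t : ι → ℤ → ℤ → M}
    (ht : ∀ l, ShiftAntisymm (t l)) : ShiftAntisymm fun x y => ∑ l ∈ s, t l x y := fun x y => by
  have h : ∀ x y, shiftComb (fun x y => ∑ l ∈ s, t l x y) x y = ∑ l ∈ s, shiftComb (t l) x y := by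
    simp [shiftComb, sum_add_distrib]
  rw [h, h, ← sum_neg_distrib]
  exact sum_congr rfl fun l _ => ht l x y

protected theorem signedSum (u v : ℤ) {t : ℤ → ℤ → ℤ → M} (ht : ∀ l, ShiftAntisymm (t l)) :
    ShiftAntisymm fun x y => signedSum u v fun l => t l x y := by
  simpa only [signedSum, sub_eq_add_neg] using
    (ShiftAntisymm.sum _ ht).add (ShiftAntisymm.sum _ ht).neg

end ShiftAntisymm

theorem add_eq_add_swap_of_mixedDiff_eq_zero {Q : ℤ → ℤ → M}
    (h : ∀ x y, Q (x + 1) (y + 1) = Q (x + 1) y + Q x (y + 1) - Q x y) (x y x' y' : ℤ) :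
    Q x y + Q x' y' = Q x y' + Q x' y := by
  have hstep (x x' y : ℤ) : Q x (y + 1) - Q x y = Q x' (y + 1) - Q x' y := by
    have hx : Periodic (fun x => Q x (y + 1) - Q x y) 1 := fun x => by
      linear_combination (norm := module) h x y
    simpa using (hx.int_mul_eq x).trans (hx.int_mul_eq x').symm
  have hy : Periodic (fun y => Q x y - Q x' y) 1 := fun y => by
    linear_combination (norm := module) hstep x x' y
  have := (hy.int_mul_eq y).trans (hy.int_mul_eq y').symm
  simp only [mul_one, Int.cast_id] at this
  linear_combination (norm := module) this

theorem ShiftAntisymm.diagBalanced_shiftComb [IsAddTorsionFree M] {t P : ℤ → ℤ → M}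
    (ht : ShiftAntisymm t)
    (hP : ∀ x y, P (x + 1) (y + 1) - P (x + 1) y - P x (y + 1) + P x y = t x y) :
    DiagBalanced (shiftComb P) := fun x y => by
  have h := add_eq_add_swap_of_mixedDiff_eq_zero
    (Q := fun x y => shiftComb P x y + shiftComb P y x) (fun x y => by
      have h := ht x y
      simp only [shiftComb, ← hP] at h ⊢
      linear_combination (norm := module) h) x y y x
  exact nsmul_right_injective two_ne_zero (by linear_combination (norm := module) h)

theorem DiagBalanced.shiftComb_shiftComb_right {U : ℤ → ℤ → ℤ → M}
    (hU : ∀ w, DiagBalanced (U · · w)) (p q w : ℤ) :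
    shiftComb (fun q w => shiftComb (U · q ·) p w) q w +
        shiftComb (fun p w => shiftComb (U · p ·) q w) p w =
      shiftComb (fun p w => U p p w) p w + shiftComb (fun q w => U q q w) q w := by
  simp only [DiagBalanced, shiftComb] at hU ⊢
  linear_combination (norm := module) hU w p q + hU (w + 1) (p + 1) q + hU (w + 1) p (q + 1) -
    2 • hU (w + 1) p q + hU (w + 1 + 1) (p + 1) (q + 1) - hU (w + 1 + 1) (p + 1) q -
    hU (w + 1 + 1) p (q + 1) + hU (w + 1 + 1) p q

theorem DiagBalanced.shiftComb_shiftComb_left {W : ℤ → ℤ → ℤ → M}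
    (hW : ∀ v, DiagBalanced (W v)) (v p q : ℤ) :
    shiftComb (fun v p => shiftComb (W · p ·) v q) v p +
        shiftComb (fun v q => shiftComb (W · q ·) v p) v q =
      shiftComb (fun v p => W v p p) (v + 1) p + shiftComb (fun v q => W v q q) (v + 1) q := by
  simp only [DiagBalanced, shiftComb] at hW ⊢
  linear_combination (norm := module) hW v p q + hW (v + 1) (p + 1) q - hW v (p + 1) q +
    hW (v + 1) p (q + 1) - hW v p (q + 1) + hW (v + 1 + 1) (p + 1) (q + 1) -
    2 • hW (v + 1) (p + 1) (q + 1) + hW v (p + 1) (q + 1)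

theorem ShiftAntisymm.of_diagBalanced [IsAddTorsionFree M] {B : ℤ → ℤ → ℤ → M}
    (hU : ∀ w, DiagBalanced (shiftComb fun v b => B v b w))
    (hW : ∀ v, DiagBalanced (shiftComb (B v))) :
    ShiftAntisymm fun x y => shiftComb (B (x + 1)) y y - shiftComb (fun v b => B v b y) x x := by
  -- `X` applies the three operators for the pairs `(v, b)`, `(b, w)` and `(v, w)` to `B`.
  let X (v b w : ℤ) : M :=
    shiftComb (fun b w => shiftComb (fun v w => shiftComb (fun v b => B v b w) v b) v w) b w
  have hX (v b w : ℤ) : X v b w =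
      shiftComb (fun v b => shiftComb (fun v w => shiftComb (B v) b w) v w) v b := by
    simp only [X, shiftComb]
    abel
  let u (p w : ℤ) : M := shiftComb (fun v b => B v b w) p p
  let d (v p : ℤ) : M := shiftComb (B v) p p
  have hleft (p q w : ℤ) : X p q w + X q p w = shiftComb u p w + shiftComb u q w :=
    DiagBalanced.shiftComb_shiftComb_right hU p q w
  have hright (v p q : ℤ) : X v p q + X v q p = shiftComb d (v + 1) p + shiftComb d (v + 1) q := by
    rw [hX, hX]
    exact DiagBalanced.shiftComb_shiftComb_left hW v p q
  have hleft_diag (p w : ℤ) : X p p w = shiftComb u p w :=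
    nsmul_right_injective two_ne_zero (by simpa only [two_nsmul] using hleft p p w)
  have hright_diag (v p : ℤ) : X v p p = shiftComb d (v + 1) p :=
    nsmul_right_injective two_ne_zero (by simpa only [two_nsmul] using hright v p p)
  have hdiff (x y : ℤ) : shiftComb (fun x y => d (x + 1) y - u x y) x y = X x y y - X x x y := by
    rw [hright_diag, hleft_diag]
    simp only [shiftComb]
    abel
  intro x y
  rw [hdiff, hdiff]
  linear_combination (norm := module) hleft x y y - hright y x y - hleft_diag x y -
    hleft_diag y y + hright_diag y x + hright_diag y y

theorem ShiftAntisymm.shiftComb_self [IsAddTorsionFree M] {t : ℤ → ℤ → M} (ht : ShiftAntisymm t)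
    (x : ℤ) : shiftComb t x x = 0 :=
  self_eq_neg.1 (ht x x)

theorem ShiftAntisymm.apply_add_two [IsAddTorsionFree M] {t : ℤ → ℤ → M} (ht : ShiftAntisymm t)
    (m : ℤ) : t m (m + 2) = t m m + t (m + 1) (m + 1) + t (m + 2) (m + 2) + t (m + 2) (m + 1) +
      t (m + 1) m := by
  have h₀ := ht.shiftComb_self m
  have h₁ := ht.shiftComb_self (m + 1)
  have h₂ := ht m (m + 1)
  simp only [shiftComb, add_assoc, one_add_one_eq_two] at h₀ h₁ h₂
  linear_combination (norm := module) -h₀ - h₁ - h₂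

namespace ShiftAntisymm

variable [IsAddTorsionFree M]

theorem interlace_adjacent (u : ℤ) {F : ℤ → ℤ → ℤ → M} (hF : ∀ w, ShiftAntisymm (F · · w))
    (hD : ∀ a, ShiftAntisymm fun b w => F a b (w + 1) - F a b w) :
    ShiftAntisymm fun x y =>
      signedSum u x (fun a => signedSum x y (F a · y) + F a y (y + 1)) +
        (signedSum (x + 1) y (F x · y) + F x y (y + 1)) := by
  let B (v b w : ℤ) : M := signedSum u v fun a => signedSum 0 b (F a · w)
  have hB := of_diagBalanced (B := B)
    (fun w => (hF w).diagBalanced_shiftComb fun v b => by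
      simp only [B, signedSum_succ_right, signedSum_add]
      abel)
    (fun v => (ShiftAntisymm.signedSum u v hD).diagBalanced_shiftComb fun b w => by
      simp only [B, signedSum_succ_right, signedSum_add, signedSum_sub]
      abel)
  convert hB using 3 with x y
  simp only [B, shiftComb, signedSum_succ_right, signedSum_succ_left, signedSum_add,
    signedSum_eq_sub_signedSum x y 0, signedSum_sub]
  abel

theorem interlace_first {F : ℤ → ℤ → M} (hF : ShiftAntisymm fun b w => F b (w + 1) - F b w) :
    ShiftAntisymm fun x y => signedSum x y (F · y) + F y (y + 1) := by
  let B (_ b w : ℤ) : M := signedSum 0 b (F · w)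
  have hB := of_diagBalanced (B := B)
    (fun w => ShiftAntisymm.zero.diagBalanced_shiftComb fun v b => by simp [B])
    (fun v => hF.diagBalanced_shiftComb fun b w => by
      simp only [B, signedSum_succ_right]
      abel)
  convert hB using 3 with x y
  rw [signedSum_eq_sub_signedSum x y 0]
  simp only [B, shiftComb, signedSum_succ_right]
  abel

end ShiftAntisymm

end ShiftAntisymm

section InterlaceSum

variable {M : Type*} [AddCommGroup M]

/-- The iterated signed sum of `f (l₀, …, lₙ₋₁)` over `l₀ ∈ [u, k₀]`, `l₁ ∈ [k₀, k₁]`, …, where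
`lᵢ₊₁` starts at `kᵢ + 1` instead of `kᵢ` if `lᵢ = kᵢ`. -/
noncomputable def interlaceSum : {n : ℕ} → ((Fin n → ℤ) → M) → ℤ → (Fin n → ℤ) → M
  | 0, f, _, k => f k
  | _ + 1, f, u, k =>
    signedSum u (k 0) (fun l => interlaceSum (fun ls => f (Fin.cons l ls)) (k 0) (Fin.tail k)) +
      interlaceSum (fun ls => f (Fin.cons (k 0) ls)) (k 0 + 1) (Fin.tail k)

/-- The signed sum of `f` over the rows that may stand above the row `k` of a Monotone Triangle;
it continues the sum over the strictly increasing rows interlacing with `k` from strictly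
increasing `k` to all `k`. -/
noncomputable def rowSum {n : ℕ} (f : (Fin n → ℤ) → M) (k : Fin (n + 1) → ℤ) : M :=
  interlaceSum f (k 0) (Fin.tail k)

/-- The signed enumeration of Monotone Triangles of size `n` with arbitrary bottom row. -/
noncomputable def triangleSum : (n : ℕ) → (Fin n → ℤ) → ℚ
  | 0 => 1
  | n + 1 => rowSum (triangleSum n)

theorem interlaceSum_cons {n : ℕ} (f : (Fin (n + 1) → ℤ) → M) (u y : ℤ) (k : Fin n → ℤ) :
    interlaceSum f u (Fin.cons y k : Fin (n + 1) → ℤ) =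
      signedSum u y (fun l => interlaceSum (fun ls => f (Fin.cons l ls)) y k) +
        interlaceSum (fun ls => f (Fin.cons y ls)) (y + 1) k := by
  simp [interlaceSum]

theorem rowSum_cons {n : ℕ} (f : (Fin n → ℤ) → M) (y : ℤ) (k : Fin n → ℤ) :
    rowSum f (Fin.cons y k : Fin (n + 1) → ℤ) = interlaceSum f y k := by
  simp [rowSum]

theorem interlaceSum_succ_left {n : ℕ} (f : (Fin (n + 1) → ℤ) → M) (u : ℤ)
    (k : Fin (n + 1) → ℤ) :
    interlaceSum f (u + 1) k =
      interlaceSum f u k - interlaceSum (fun ls => f (Fin.cons u ls)) (k 0) (Fin.tail k) := by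
  simp only [interlaceSum, signedSum_succ_left]
  abel

theorem interlaceSum_add {n : ℕ} (f g : (Fin n → ℤ) → M) (u : ℤ) (k : Fin n → ℤ) :
    interlaceSum (fun l => f l + g l) u k = interlaceSum f u k + interlaceSum g u k := by
  induction n generalizing u with
  | zero => rfl
  | succ n ih =>
    simp only [interlaceSum, ih, signedSum_add]
    abel

theorem interlaceSum_mul_left {R : Type*} [Ring R] {n : ℕ} (c : R) (f : (Fin n → ℤ) → R) (u : ℤ)
    (k : Fin n → ℤ) : interlaceSum (fun l => c * f l) u k = c * interlaceSum f u k := by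
  induction n generalizing u with
  | zero => rfl
  | succ n ih => simp only [interlaceSum, ih, signedSum_mul_left, mul_add]

end InterlaceSum

section AdjacentShiftAntisymm

variable {M : Type*} [AddCommGroup M]

theorem ShiftAntisymm.interlaceSum {n : ℕ} {f : ℤ → ℤ → (Fin n → ℤ) → M}
    (hf : ∀ l, ShiftAntisymm (f · · l)) (u : ℤ) (k : Fin n → ℤ) :
    ShiftAntisymm fun x y => interlaceSum (f x y) u k := by
  induction n generalizing u with
  | zero => exact hf k
  | succ n ih =>
    exact (ShiftAntisymm.signedSum _ _ fun l => ih (fun ls => hf (Fin.cons l ls)) _ _).add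
      (ih (fun ls => hf (Fin.cons (k 0) ls)) _ _)

theorem update_update_cons_cons {α : Type*} {n : ℕ} (a b x y : α) (l : Fin n → α) :
    update (update (Fin.cons a (Fin.cons b l : Fin (n + 1) → α)) 0 x) 1 y =
      (Fin.cons x (Fin.cons y l : Fin (n + 1) → α) : Fin (n + 2) → α) := by
  rw [Fin.update_cons_zero, ← Fin.succ_zero_eq_one, ← Fin.cons_update, Fin.update_cons_zero]

/-- Shift-antisymmetry of `f` in every pair of adjacent arguments. -/
def AdjacentShiftAntisymm {n : ℕ} (f : (Fin n → ℤ) → M) : Prop :=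
  ∀ (i j : Fin n), i.1 + 1 = j.1 → ∀ k : Fin n → ℤ,
    ShiftAntisymm fun x y => f (update (update k i x) j y)

namespace AdjacentShiftAntisymm

theorem of_le_one {n : ℕ} (hn : n ≤ 1) (f : (Fin n → ℤ) → M) : AdjacentShiftAntisymm f :=
  fun i j hij => by lia

protected theorem add {n : ℕ} {f g : (Fin n → ℤ) → M} (hf : AdjacentShiftAntisymm f)
    (hg : AdjacentShiftAntisymm g) : AdjacentShiftAntisymm fun k => f k + g k :=
  fun i j hij k => (hf i j hij k).add (hg i j hij k)

protected theorem signedSum {n : ℕ} (u v : ℤ) {f : ℤ → (Fin n → ℤ) → M}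
    (hf : ∀ l, AdjacentShiftAntisymm (f l)) :
    AdjacentShiftAntisymm fun k => signedSum u v fun l => f l k :=
  fun i j hij k => .signedSum u v fun l => hf l i j hij k

theorem iff_cons {n : ℕ} {f : (Fin (n + 2) → ℤ) → M} :
    AdjacentShiftAntisymm f ↔
      (∀ l : Fin n → ℤ,
        ShiftAntisymm fun x y => f (Fin.cons x (Fin.cons y l : Fin (n + 1) → ℤ))) ∧
        ∀ x, AdjacentShiftAntisymm fun l => f (Fin.cons x l) := by
  constructor
  · intro hf
    refine ⟨fun l => ?_, fun a i j hij k => ?_⟩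
    · have h := hf 0 1 rfl (Fin.cons 0 (Fin.cons 0 l : Fin (n + 1) → ℤ))
      simpa only [update_update_cons_cons] using h
    · simpa [Fin.cons_update] using hf i.succ j.succ (by simpa using hij) (Fin.cons a k)
  · rintro ⟨hhead, htail⟩ i j hij k
    obtain ⟨a, k, rfl⟩ : ∃ a l, k = Fin.cons a l := ⟨k 0, Fin.tail k, by simp⟩
    cases j using Fin.cases with
    | zero => simp at hij
    | succ j =>
      cases i using Fin.cases with
      | zero =>
        obtain rfl : j = 0 := by ext; simpa using hij.symm
        obtain ⟨b, k, rfl⟩ : ∃ b l, k = Fin.cons b l := ⟨k 0, Fin.tail k, by simp⟩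
        simpa only [Fin.succ_zero_eq_one, update_update_cons_cons] using hhead k
      | succ i =>
        simpa [← Fin.cons_update] using htail a i j (by simpa using hij) k

variable [IsAddTorsionFree M]

protected theorem interlaceSum {n : ℕ} {f : (Fin n → ℤ) → M} (hf : AdjacentShiftAntisymm f)
    (u : ℤ) : AdjacentShiftAntisymm (interlaceSum f u) := by
  induction n generalizing u with
  | zero => exact of_le_one zero_le_one _
  | succ n ih =>
    cases n with
    | zero => exact of_le_one le_rfl _
    | succ n =>
      obtain ⟨hhead, htail⟩ := iff_cons.1 hf
      refine iff_cons.2 ⟨fun l => ?_, fun a => ?_⟩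
      · simp only [interlaceSum_cons]
        refine ShiftAntisymm.interlace_adjacent u (fun w => .interlaceSum hhead w l) fun a => ?_
        cases n with
        | zero => simpa [interlaceSum] using ShiftAntisymm.zero
        | succ n =>
          simp only [interlaceSum_succ_left, sub_sub_cancel_left]
          exact .neg (.interlaceSum (fun ls => (iff_cons.1 (htail a)).1 ls) _ _)
      · simp only [interlaceSum_cons]
        exact (AdjacentShiftAntisymm.signedSum _ _ fun l => ih (htail l) a).add (ih (htail a) _)

protected theorem rowSum {n : ℕ} {f : (Fin n → ℤ) → M} (hf : AdjacentShiftAntisymm f) :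
    AdjacentShiftAntisymm (rowSum f) := by
  cases n with
  | zero => exact of_le_one le_rfl _
  | succ n =>
    refine iff_cons.2 ⟨fun l => ?_, fun a => ?_⟩
    · simp only [rowSum_cons, interlaceSum_cons]
      refine ShiftAntisymm.interlace_first ?_
      cases n with
      | zero => simpa [interlaceSum] using ShiftAntisymm.zero
      | succ n =>
        simp only [interlaceSum_succ_left, sub_sub_cancel_left]
        exact .neg (.interlaceSum (fun ls => (iff_cons.1 hf).1 ls) _ _)
    · simpa only [rowSum_cons] using hf.interlaceSum a

end AdjacentShiftAntisymm

theorem adjacentShiftAntisymm_triangleSum (n : ℕ) : AdjacentShiftAntisymm (triangleSum n) := by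
  induction n with
  | zero => exact .of_le_one zero_le_one _
  | succ n ih => exact ih.rowSum

end AdjacentShiftAntisymm

section Polynomiality

open Polynomial

/-- `f` is the restriction to integer points of a polynomial with rational coefficients. -/
def IsPolynomialFun {σ : Type*} (f : (σ → ℤ) → ℚ) : Prop :=
  ∃ P : MvPolynomial σ ℚ, ∀ k : σ → ℤ, f k = MvPolynomial.eval (fun i => (k i : ℚ)) P

namespace IsPolynomialFun

variable {σ τ : Type*}

theorem const (c : ℚ) : IsPolynomialFun fun _ : σ → ℤ => c :=
  ⟨MvPolynomial.C c, by simp⟩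

theorem eval_apply (q : ℚ[X]) (i : σ) : IsPolynomialFun fun k : σ → ℤ => q.eval (k i : ℚ) :=
  ⟨aeval (MvPolynomial.X i) q, fun k => by
    simpa [MvPolynomial.aeval_eq_eval, coe_aeval_eq_eval] using
      aeval_algHom_apply (MvPolynomial.aeval fun i => (k i : ℚ)) (MvPolynomial.X i) q⟩

theorem apply (i : σ) : IsPolynomialFun fun k : σ → ℤ => (k i : ℚ) :=
  ⟨MvPolynomial.X i, by simp⟩

protected theorem add {f g : (σ → ℤ) → ℚ} (hf : IsPolynomialFun f) (hg : IsPolynomialFun g) :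
    IsPolynomialFun fun k => f k + g k := by
  obtain ⟨P, hP⟩ := hf
  obtain ⟨Q, hQ⟩ := hg
  exact ⟨P + Q, by simp [hP, hQ]⟩

protected theorem sub {f g : (σ → ℤ) → ℚ} (hf : IsPolynomialFun f) (hg : IsPolynomialFun g) :
    IsPolynomialFun fun k => f k - g k := by
  obtain ⟨P, hP⟩ := hf
  obtain ⟨Q, hQ⟩ := hg
  exact ⟨P - Q, by simp [hP, hQ]⟩

protected theorem mul {f g : (σ → ℤ) → ℚ} (hf : IsPolynomialFun f) (hg : IsPolynomialFun g) :
    IsPolynomialFun fun k => f k * g k := by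
  obtain ⟨P, hP⟩ := hf
  obtain ⟨Q, hQ⟩ := hg
  exact ⟨P * Q, by simp [hP, hQ]⟩

protected theorem comp {f : (τ → ℤ) → ℚ} (hf : IsPolynomialFun f) {g : (σ → ℤ) → τ → ℤ}
    (hg : ∀ i, IsPolynomialFun fun k => (g k i : ℚ)) : IsPolynomialFun fun k => f (g k) := by
  obtain ⟨P, hP⟩ := hf
  choose Q hQ using hg
  refine ⟨MvPolynomial.bind₁ Q P, fun k => ?_⟩
  simp [hP, hQ, ← MvPolynomial.aeval_eq_eval, MvPolynomial.aeval_bind₁]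

theorem eq_of_eq_on_strictMono {n : ℕ} {f g : (Fin n → ℤ) → ℚ} (hf : IsPolynomialFun f)
    (hg : IsPolynomialFun g) (h : ∀ k, StrictMono k → f k = g k) : f = g := by
  obtain ⟨P, hP⟩ := hf
  obtain ⟨Q, hQ⟩ := hg
  ext k
  -- Restricted to the line `t ↦ k + t • (0, 1, …, n - 1)`, both sides are polynomials in `t`, and
  -- the points with large `t` are strictly increasing.
  let line : Fin n → ℚ[X] := fun i => C (k i : ℚ) + C (i : ℚ) * X
  have hline (R : MvPolynomial (Fin n) ℚ) (t : ℤ) :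
      (MvPolynomial.aeval line R).eval (t : ℚ) =
        MvPolynomial.eval (fun i => ((k i + i * t : ℤ) : ℚ)) R := by
    simpa [line, MvPolynomial.aeval_eq_eval, coe_aeval_eq_eval] using
      MvPolynomial.comp_aeval_apply line (aeval (t : ℚ)) R
  obtain ⟨T, hT⟩ : ∃ T : ℤ, ∀ t ≥ T, StrictMono fun i : Fin n => k i + i * t := by
    refine Filter.eventually_atTop.1 ?_
    simp only [StrictMono, Filter.eventually_all]
    intro i j hij
    filter_upwards [Filter.eventually_gt_atTop |k i - k j|] with t ht
    have hj : (i : ℤ) + 1 ≤ j := by exact_mod_cast hij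
    nlinarith [abs_nonneg (k i - k j), le_abs_self (k i - k j)]
  have heq : MvPolynomial.aeval line P = MvPolynomial.aeval line Q := by
    refine eq_of_infinite_eval_eq _ _ (((Set.Ici_infinite T).image
      (Int.cast_injective (α := ℚ)).injOn).mono ?_)
    rintro _ ⟨t, ht, rfl⟩
    rw [Set.mem_ofPred_eq, hline, hline, ← hP, ← hQ, h _ (hT t ht)]
  have h0 := congrArg (eval ((0 : ℤ) : ℚ)) heq
  simpa only [hline, mul_zero, add_zero, ← hP, ← hQ] using h0

end IsPolynomialFun

theorem exists_polynomial_antidifference (q : ℚ[X]) :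
    ∃ Q : ℚ[X], ∀ x : ℚ, Q.eval (x + 1) = Q.eval x + q.eval x := by
  induction q using Polynomial.induction_on' with
  | add p q hp hq =>
    obtain ⟨P, hP⟩ := hp
    obtain ⟨Q, hQ⟩ := hq
    exact ⟨P + Q, fun x => by simp only [eval_add, hP, hQ]; ring⟩
  | monomial n a =>
    refine ⟨C (a / (n + 1)) * Polynomial.bernoulli (n + 1), fun x => ?_⟩
    have hn : (n : ℚ) + 1 ≠ 0 := by positivity
    rw [eval_mul, add_comm x 1, bernoulli_eval_one_add]
    simp only [eval_C, Nat.cast_add, Nat.cast_one, add_tsub_cancel_right, eval_mul, eval_monomial]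
    field_simp

theorem IsPolynomialFun.rowSum_prod {n : ℕ} (q : Fin n → ℚ[X]) :
    IsPolynomialFun (rowSum fun l : Fin n → ℤ => ∏ i, (q i).eval (l i : ℚ)) := by
  induction n with
  | zero => exact .const 1
  | succ n ih =>
    obtain ⟨Q, hQ⟩ := exists_polynomial_antidifference (q 0)
    let g := rowSum fun l : Fin n → ℤ => ∏ i, (q i.succ).eval (l i : ℚ)
    have hg : IsPolynomialFun g := ih fun i => q i.succ
    have hsum := signedSum_eq_sub (q := fun v : ℤ => (q 0).eval (v : ℚ))
      (Q := fun v : ℤ => Q.eval (v : ℚ)) fun v => by simp [hQ]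
    have hk : rowSum (fun l => ∏ i, (q i).eval (l i : ℚ)) = fun k =>
        (Q.eval (k 1 : ℚ) - Q.eval (k 0 : ℚ)) * g (Fin.tail k) +
          (q 0).eval (k 1 : ℚ) * g (Fin.cons (k 1 + 1) (Fin.tail (Fin.tail k))) := by
      ext k
      simp only [g, rowSum, interlaceSum, Fin.prod_univ_succ, Fin.cons_zero, Fin.cons_succ,
        interlaceSum_mul_left, signedSum_mul_right, hsum, Fin.tail_cons]
      rfl
    rw [hk]
    refine (((eval_apply ..).sub (eval_apply ..)).mul (hg.comp fun i => ?_)).add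
      ((eval_apply ..).mul (hg.comp fun i => ?_))
    · exact apply i.succ
    · cases i using Fin.cases with
      | zero => simpa using (apply 1).add (const 1)
      | succ i => simpa [Fin.tail] using apply i.succ.succ

protected theorem IsPolynomialFun.rowSum {n : ℕ} {f : (Fin n → ℤ) → ℚ} (hf : IsPolynomialFun f) :
    IsPolynomialFun (rowSum f) := by
  obtain ⟨P, hP⟩ := hf
  rw [funext hP]
  clear hP
  unfold rowSum
  induction P using MvPolynomial.induction_on' with
  | monomial d c =>
    have hmul := (IsPolynomialFun.const c).mul (rowSum_prod fun i => X ^ d i)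
    simpa [rowSum, interlaceSum_mul_left, MvPolynomial.eval_monomial,
      Finsupp.prod_fintype] using hmul
  | add P Q hP hQ => simpa [interlaceSum_add] using hP.add hQ

theorem isPolynomialFun_triangleSum (n : ℕ) : IsPolynomialFun (triangleSum n) := by
  induction n with
  | zero => exact .const 1
  | succ n ih => exact ih.rowSum

end Polynomiality

section Counting

open scoped Classical in
/-- The strictly increasing rows `l` with `a ≤ l ≤ b` entrywise. -/
noncomputable def strictRows {n : ℕ} (a b : Fin n → ℤ) : Finset (Fin n → ℤ) :=
  {l ∈ Icc a b | StrictMono l}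

theorem mem_strictRows {n : ℕ} {a b l : Fin n → ℤ} :
    l ∈ strictRows a b ↔ (∀ j, a j ≤ l j ∧ l j ≤ b j) ∧ StrictMono l := by
  simp [strictRows, Pi.le_def, forall_and]

theorem cons_mem_strictRows_init_cons {n : ℕ} {u a : ℤ} {k : Fin (n + 1) → ℤ} {l : Fin n → ℤ} :
    (Fin.cons a l : Fin (n + 1) → ℤ) ∈ strictRows (Fin.init (Fin.cons u k : Fin (n + 2) → ℤ)) k ↔
      a ∈ Icc u (k 0) ∧ l ∈ strictRows
        (Fin.init (Fin.cons (max (k 0) (a + 1)) (Fin.tail k) : Fin (n + 1) → ℤ)) (Fin.tail k) := by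
  cases n with
  | zero => simp [mem_strictRows, Subsingleton.strictMono, Fin.init]
  | succ n =>
    have hfirst : StrictMono l → (a < l 0 ↔ ∀ j, a < l j) := fun hl =>
      ⟨fun h j => h.trans_le (hl.monotone (Fin.zero_le j)), fun h => h 0⟩
    simp only [mem_strictRows, Fin.strictMono_cons, Fin.forall_fin_succ (P := fun _ => _ ∧ _),
      Fin.cons_zero, Fin.cons_succ, mem_Icc, Fin.init, Fin.tail, Fin.castSucc_zero,
      ← Fin.succ_castSucc, max_le_iff, Int.add_one_le_iff]
    grind

theorem interlaceSum_eq_sum_Icc {M : Type*} [AddCommGroup M] {n : ℕ} (f : (Fin (n + 1) → ℤ) → M)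
    {u : ℤ} {k : Fin (n + 1) → ℤ} (hu : u ≤ k 0) :
    interlaceSum f u k = ∑ a ∈ Icc u (k 0),
      interlaceSum (fun l => f (Fin.cons a l)) (max (k 0) (a + 1)) (Fin.tail k) := by
  rw [interlaceSum, signedSum_of_le hu, ← Ico_insert_right hu, sum_insert (by simp), add_comm]
  congr 1
  · simp
  · refine sum_congr rfl fun a ha => ?_
    rw [max_eq_left (by simp at ha; lia)]

theorem interlaceSum_eq_sum_strictRows {M : Type*} [AddCommGroup M] {n : ℕ}
    (f : (Fin n → ℤ) → M) {u : ℤ} {k : Fin n → ℤ} (hk : StrictMono k) (hu : ∀ i, u ≤ k i) :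
    interlaceSum f u k = ∑ l ∈ strictRows (Fin.init (Fin.cons u k : Fin (n + 1) → ℤ)) k, f l := by
  induction n generalizing u with
  | zero =>
    rw [Subsingleton.elim (Fin.init _) k]
    simp [interlaceSum, strictRows, Subsingleton.strictMono]
  | succ n ih =>
    have htail : StrictMono (Fin.tail k) := hk.comp Fin.strictMono_succ
    rw [interlaceSum_eq_sum_Icc f (hu 0)]
    calc
      _ = ∑ a ∈ Icc u (k 0), ∑ l ∈ strictRows (Fin.init
            (Fin.cons (max (k 0) (a + 1)) (Fin.tail k) : Fin (n + 1) → ℤ)) (Fin.tail k),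
            f (Fin.cons a l) := sum_congr rfl fun a ha => ih _ htail fun i => by
        have := hk (Fin.succ_pos i)
        simp only [mem_Icc] at ha
        simp only [Fin.tail]
        lia
      _ = _ := by
        rw [sum_sigma']
        refine sum_nbij' (fun p => Fin.cons p.1 p.2) (fun l => ⟨l 0, Fin.tail l⟩) ?_ ?_ ?_ ?_ ?_
        · rintro ⟨a, l⟩ h
          exact cons_mem_strictRows_init_cons.2 (mem_sigma.1 h)
        · intro l h
          exact mem_sigma.2 (cons_mem_strictRows_init_cons.1 (by rwa [Fin.cons_self_tail]))
        · simp
        · simp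
        · simp

theorem rowSum_eq_sum_strictRows {M : Type*} [AddCommGroup M] {n : ℕ} (f : (Fin n → ℤ) → M)
    {k : Fin (n + 1) → ℤ} (hk : StrictMono k) :
    rowSum f k = ∑ l ∈ strictRows (Fin.init k) (Fin.tail k), f l := by
  have htail : StrictMono (Fin.tail k) := hk.comp Fin.strictMono_succ
  rw [rowSum, interlaceSum_eq_sum_strictRows f htail fun i => (hk (Fin.succ_pos i)).le,
    Fin.cons_self_tail]

/-- Row `n` of a triangular array, shifted to indices starting at `0`. -/
def triRow (n : ℕ) (a : ℕ → ℕ → ℤ) : Fin n → ℤ :=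
  fun j => a n (j + 1)

/-- The row `k` as a row of a triangular array: indices start at `1`, and the entries outside the
row are `0`. -/
def rowEntries {n : ℕ} (k : Fin n → ℤ) (j : ℕ) : ℤ :=
  if h : 1 ≤ j ∧ j ≤ n then k ⟨j - 1, by lia⟩ else 0

theorem rowEntries_succ {n : ℕ} (k : Fin n → ℤ) (j : Fin n) : rowEntries k (j + 1) = k j := by
  simp [rowEntries]

theorem IsTri.eq_rowEntries {n : ℕ} {a : ℕ → ℕ → ℤ} {k : Fin n → ℤ} (ha : IsTri n a)
    (hk : BottomRow n a k) : a n = rowEntries k := by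
  ext j
  rw [rowEntries]
  split_ifs with h
  · rw [← hk, Nat.sub_add_cancel h.1]
  · exact ha n j (by lia)

theorem IsMT.strictMono_triRow {n i : ℕ} {a : ℕ → ℕ → ℤ} (ha : IsMT n a) (hi : i ≤ n) :
    StrictMono (triRow i a) := by
  cases i with
  | zero => exact Subsingleton.strictMono _
  | succ i =>
    exact Fin.strictMono_iff_lt_succ.2 fun j => ha.2.1 (i + 1) (j + 1) (by lia) (by lia) hi

theorem IsMT.triRow_mem_strictRows {n : ℕ} {a : ℕ → ℕ → ℤ} (ha : IsMT (n + 1) a) :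
    triRow n a ∈ strictRows (Fin.init (triRow (n + 1) a)) (Fin.tail (triRow (n + 1) a)) :=
  mem_strictRows.2 ⟨fun j => ha.2.2 n (j + 1) (by lia) (by lia) le_rfl,
    ha.strictMono_triRow n.le_succ⟩

theorem IsMT.update_zero {n : ℕ} {a : ℕ → ℕ → ℤ} (ha : IsMT (n + 1) a) :
    IsMT n (update a (n + 1) 0) := by
  obtain ⟨htri, hrow, hdiag⟩ := ha
  refine ⟨fun i j hij => ?_, fun i j h1 h2 h3 => ?_, fun i j h1 h2 h3 => ?_⟩
  · rcases eq_or_ne i (n + 1) with rfl | hi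
    · simp
    · simpa [hi] using htri i j (by lia)
  · simpa [show i ≠ n + 1 by lia] using hrow i j h1 h2 (by lia)
  · simpa [show i ≠ n + 1 by lia, show i ≠ n by lia] using hdiag i j h1 h2 (by lia)

theorem IsMT.update_rowEntries {n : ℕ} {a : ℕ → ℕ → ℤ} {k : Fin (n + 1) → ℤ} (ha : IsMT n a)
    (hk : StrictMono k) (hrow : triRow n a ∈ strictRows (Fin.init k) (Fin.tail k)) :
    IsMT (n + 1) (update a (n + 1) (rowEntries k)) := by
  obtain ⟨htri, hstrict, hdiag⟩ := ha
  have hrow := (mem_strictRows.1 hrow).1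
  refine ⟨fun i j hij => ?_, fun i j h1 h2 h3 => ?_, fun i j h1 h2 h3 => ?_⟩
  · rcases eq_or_ne i (n + 1) with rfl | hi
    · simp [rowEntries, show ¬ (1 ≤ j ∧ j ≤ n + 1) by lia]
    · simpa [hi] using htri i j (by lia)
  · rcases eq_or_ne i (n + 1) with rfl | hi
    · simpa [rowEntries, h1, h3, show j ≤ n + 1 by lia, show j ≤ n by lia] using hk (by simp; lia)
    · simpa [hi] using hstrict i j h1 h2 (by lia)
  · obtain ⟨j, rfl⟩ := Nat.exists_eq_add_of_le' h1
    rcases eq_or_ne i n with rfl | hi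
    · simpa [rowEntries, triRow, Fin.init, Fin.tail, show j < i by lia, show j ≤ i by lia]
        using hrow ⟨j, by lia⟩
    · simpa [hi, show i ≠ n + 1 by lia] using hdiag i (j + 1) h1 h2 (by lia)

/-- Removing the bottom row of a Monotone Triangle. -/
noncomputable def mtsetSuccEquiv {n : ℕ} {k : Fin (n + 1) → ℤ} (hk : StrictMono k) :
    MTset (n + 1) k ≃ Σ l : strictRows (Fin.init k) (Fin.tail k), MTset n l where
  toFun a := ⟨⟨triRow n a, by
      obtain ⟨a, ha, hb⟩ := a
      obtain rfl : triRow (n + 1) a = k := funext hb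
      exact ha.triRow_mem_strictRows⟩,
    ⟨update a (n + 1) 0, a.2.1.update_zero, fun j => by simp [triRow]⟩⟩
  invFun := fun ⟨l, b⟩ => ⟨update b (n + 1) (rowEntries k),
    b.2.1.update_rowEntries hk (by rw [show triRow n b = l from funext b.2.2]; exact l.2),
    fun j => by simp [rowEntries_succ]⟩
  left_inv := fun ⟨a, ha, hb⟩ => by simp [← ha.1.eq_rowEntries hb]
  right_inv := fun ⟨⟨l, hl⟩, ⟨b, hb, hbl⟩⟩ => by
    have hzero : b (n + 1) = 0 := funext fun j => hb.1 (n + 1) j (by lia)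
    refine Sigma.subtype_ext (Subtype.ext (funext fun j => ?_)) ?_
    · simpa [triRow] using hbl j
    · simp [← hzero]

theorem MTset_zero (k : Fin 0 → ℤ) : MTset 0 k = {0} := by
  refine Set.eq_singleton_iff_unique_mem.2 ⟨⟨⟨fun _ _ _ => rfl, ?_, ?_⟩, fun j => j.elim0⟩,
    fun a ha => funext₂ fun i j => ha.1.1 i j (by lia)⟩
  · intros
    lia
  · intros
    lia

theorem finite_MTset_and_ncard_eq {n : ℕ} {k : Fin n → ℤ} (hk : StrictMono k) :
    (MTset n k).Finite ∧ ((MTset n k).ncard : ℚ) = triangleSum n k := by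
  induction n with
  | zero => simp [MTset_zero, triangleSum]
  | succ n ih =>
    have hl (l : strictRows (Fin.init k) (Fin.tail k)) := ih (mem_strictRows.1 l.2).2
    have (l : strictRows (Fin.init k) (Fin.tail k)) : Finite (MTset n l) := (hl l).1
    refine ⟨Finite.of_equiv _ (mtsetSuccEquiv hk).symm, ?_⟩
    rw [← Nat.card_coe_set_eq, Nat.card_congr (mtsetSuccEquiv hk), Nat.card_sigma, triangleSum,
      rowSum_eq_sum_strictRows _ hk]
    simpa [(hl _).2] using sum_coe_sort _ _

end Counting

theorem IsAlpha.eq_triangleSum {n : ℕ} {α : (Fin n → ℤ) → ℚ} (hα : IsAlpha n α) :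
    α = triangleSum n := by
  obtain ⟨⟨P, -, hP⟩, hcount⟩ := hα
  exact IsPolynomialFun.eq_of_eq_on_strictMono ⟨P, hP⟩ (isPolynomialFun_triangleSum n) fun k hk =>
    (hcount k hk).trans (finite_MTset_and_ncard_eq hk).2

theorem IsAlpha.adjacentShiftAntisymm {n : ℕ} {α : (Fin n → ℤ) → ℚ} (hα : IsAlpha n α) :
    AdjacentShiftAntisymm α :=
  hα.eq_triangleSum ▸ adjacentShiftAntisymm_triangleSum n

theorem ite_eq_update_update {α : Type*} {n p : ℕ} (hp : p + 1 < n) (k : Fin n → α) (x y : α) :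
    (fun j : Fin n => if j.1 = p then x else if j.1 = p + 1 then y else k j) =
      update (update k ⟨p, by lia⟩ x) ⟨p + 1, hp⟩ y := by
  ext j
  simp only [Function.update_apply, Fin.ext_iff]
  split_ifs <;> first | rfl | lia

/-- For every `n ≥ 2`, every (0-indexed) position `p` with `p + 1 < n`, and all
integers `k₁,…` and `m`: writing `t(x,y)` for `α` evaluated with `(x,y)` in
positions `p, p+1`, the identity
`t(m, m+2) = t(m,m) + t(m+1,m+1) + t(m+2,m+2) + t(m+2,m+1) + t(m+1,m)` holds. -/
theorem alpha_pair_identity_two (n : ℕ) (hn : 2 ≤ n) (p : ℕ) (hp : p + 1 < n)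
    (α : (Fin n → ℤ) → ℚ) (hα : IsAlpha n α) (k : Fin n → ℤ) (m : ℤ) :
    α (fun j => if j.1 = p then m else if j.1 = p + 1 then m + 2 else k j) =
      α (fun j => if j.1 = p then m else if j.1 = p + 1 then m else k j) +
      α (fun j => if j.1 = p then m + 1 else if j.1 = p + 1 then m + 1 else k j) +
      α (fun j => if j.1 = p then m + 2 else if j.1 = p + 1 then m + 2 else k j) +
      α (fun j => if j.1 = p then m + 2 else if j.1 = p + 1 then m + 1 else k j) +
      α (fun j => if j.1 = p then m + 1 else if j.1 = p + 1 then m else k j) := by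
  simpa only [ite_eq_update_update hp] using
    (hα.adjacentShiftAntisymm ⟨p, by lia⟩ ⟨p + 1, hp⟩ rfl k).apply_add_two m
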